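/- Let 𝒜 be an output AOE of the simplification algorithm and let Opt be an optimal AOE with Opt ≡ 𝒜, with common task set 𝒯. For distinct tasks T, T' ∈ 𝒯: if St_𝒜(T) ≠ St_𝒜(T') then St_Opt(T) ≠ St_Opt(T'); and if End_𝒜(T) ≠ End_𝒜(T') then End_Opt(T) ≠ End_Opt(T'). -/

import Mathlib

namespace AOEPaper

/-- An activity-on-edge graph: a directed multigraph on the vertex set `verts`,
whose task edges are indexed by the type `T` (the distinct task labels), each task `t`
being an edge from `St t` to `En t`, together with a multiset `unl` of unlabeled edges. -/
structure AOE (V T : Type) where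
  verts : Finset V
  St : T → V
  En : T → V
  stMem : ∀ t, St t ∈ verts
  enMem : ∀ t, En t ∈ verts
  unl : Multiset (V × V)
  unlMem : ∀ e ∈ unl, e.1 ∈ verts ∧ e.2 ∈ verts

/-- One-step adjacency: an unlabeled edge or a task edge from `a` to `b`. -/
def AOE.adj {V T : Type} (G : AOE V T) (a b : V) : Prop :=
  (a, b) ∈ G.unl ∨ ∃ t, G.St t = a ∧ G.En t = b

/-- The graph has no directed cycle. -/
def AOE.Acyclic {V T : Type} (G : AOE V T) : Prop :=
  ∀ v : V, ¬ Relation.TransGen G.adj v v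

/-- Task `t` reaches task `t'`: `En t = St t'` or there is a directed path from
`En t` to `St t'` (intended only for `t ≠ t'`). -/
def AOE.reach {V T : Type} (G : AOE V T) (t t' : T) : Prop :=
  Relation.ReflTransGen G.adj (G.En t) (G.St t')

/-- A sequence of tasks in which each task reaches the next. -/
def AOE.chain {V T : Type} (G : AOE V T) (l : List T) : Prop :=
  l.Chain' fun t t' => t ≠ t' ∧ G.reach t t'

/-- A potential critical path: a maximal sequence of tasks in which each task
reaches the next (not a subsequence of any other such sequence). -/
def AOE.critPath {V T : Type} (G : AOE V T) (l : List T) : Prop :=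
  G.chain l ∧ ∀ l' : List T, G.chain l' → l.Sublist l' → l' = l

/-- Two AOEs with the same task labels are equivalent if they have the same set of
potential critical paths. -/
def AOE.Equiv {V W T : Type} (G : AOE V T) (H : AOE W T) : Prop :=
  ∀ l : List T, G.critPath l ↔ H.critPath l

/-- An AOE is optimal if it minimizes the number of vertices in its equivalence class. -/
def Optimal {W T : Type} (G : AOE W T) : Prop :=
  ∀ (U : Type) (H : AOE U T), H.Acyclic → AOE.Equiv G H → G.verts.card ≤ H.verts.card

/-- The vertex map replacing `v` by `u`. -/
def mergeV {V : Type} [DecidableEq V] (u v x : V) : V := if x = v then u else x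

theorem mergeV_mem {V : Type} [DecidableEq V] {S : Finset V} (u v x : V) (hx : x ∈ S) :
    mergeV u v x ∈ insert u (S.erase v) := by
  unfold mergeV
  split_ifs with h
  · exact Finset.mem_insert_self _ _
  · exact Finset.mem_insert_of_mem (Finset.mem_erase.mpr ⟨h, hx⟩)

/-- Merge vertices `u` and `v` into the single vertex `u`. -/
def AOE.merge {V T : Type} [DecidableEq V] (G : AOE V T) (u v : V) : AOE V T where
  verts := insert u (G.verts.erase v)
  St t := mergeV u v (G.St t)
  En t := mergeV u v (G.En t)
  stMem t := mergeV_mem u v (G.St t) (G.stMem t)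
  enMem t := mergeV_mem u v (G.En t) (G.enMem t)
  unl := G.unl.map fun e => (mergeV u v e.1, mergeV u v e.2)
  unlMem := by
    intro e he
    rw [Multiset.mem_map] at he
    obtain ⟨a, ha, rfl⟩ := he
    obtain ⟨h1, h2⟩ := G.unlMem a ha
    exact ⟨mergeV_mem u v a.1 h1, mergeV_mem u v a.2 h2⟩

/-- Delete one copy of the unlabeled edge `(u, v)`. -/
def AOE.delUnl {V T : Type} [DecidableEq V] (G : AOE V T) (u v : V) : AOE V T where
  verts := G.verts
  St := G.St
  En := G.En
  stMem := G.stMem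
  enMem := G.enMem
  unl := G.unl.erase (u, v)
  unlMem := fun e he => G.unlMem e (Multiset.mem_of_mem_erase he)

/-- Rule 1 (outgoing version): `u` and `v` are distinct vertices with no outgoing task
edges and precisely the same outgoing neighbors. -/
def Rule1OutCond {V T : Type} (G : AOE V T) (u v : V) : Prop :=
  u ∈ G.verts ∧ v ∈ G.verts ∧ u ≠ v ∧
    (∀ t, G.St t ≠ u) ∧ (∀ t, G.St t ≠ v) ∧ ∀ w, G.adj u w ↔ G.adj v w

/-- Rule 1 (incoming version): `u` and `v` are distinct vertices with no incoming task
edges and precisely the same incoming neighbors. -/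
def Rule1InCond {V T : Type} (G : AOE V T) (u v : V) : Prop :=
  u ∈ G.verts ∧ v ∈ G.verts ∧ u ≠ v ∧
    (∀ t, G.En t ≠ u) ∧ (∀ t, G.En t ≠ v) ∧ ∀ w, G.adj w u ↔ G.adj w v

/-- Rule 2: `(u, v)` is an unlabeled edge and there is another directed path from `u`
to `v` not using this edge. -/
def Rule2Cond {V T : Type} [DecidableEq V] (G : AOE V T) (u v : V) : Prop :=
  (u, v) ∈ G.unl ∧ Relation.TransGen (G.delUnl u v).adj u v

/-- Rule 3: `(u, v)` is an unlabeled edge such that (i) there is no other path from `u`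
to `v`; (ii) if `u` has an outgoing task then `v` has no incoming edge other than `(u,v)`;
(iii) if `v` has an incoming task then `u` has no outgoing edge other than `(u,v)`;
(iv) every incoming neighbor of `v` has a path to every outgoing neighbor of `u`. -/
def Rule3Cond {V T : Type} [DecidableEq V] (G : AOE V T) (u v : V) : Prop :=
  (u, v) ∈ G.unl ∧
  (¬ Relation.TransGen (G.delUnl u v).adj u v) ∧
  ((∃ t, G.St t = u) → (∀ t, G.En t ≠ v) ∧ ∀ w, (w, v) ∈ G.unl → w = u) ∧
  ((∃ t, G.En t = v) → (∀ t, G.St t ≠ u) ∧ ∀ w, (u, w) ∈ G.unl → w = v) ∧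
  ∀ w z, G.adj w v → G.adj u z → Relation.ReflTransGen G.adj w z

/-- One application of a simplification rule. -/
inductive Step {V T : Type} [DecidableEq V] : AOE V T → AOE V T → Prop
  | rule1out {G : AOE V T} (u v : V) : Rule1OutCond G u v → Step G (G.merge u v)
  | rule1in {G : AOE V T} (u v : V) : Rule1InCond G u v → Step G (G.merge u v)
  | rule2 {G : AOE V T} (u v : V) : Rule2Cond G u v → Step G (G.delUnl u v)
  | rule3 {G : AOE V T} (u v : V) : Rule3Cond G u v → Step G ((G.delUnl u v).merge u v)

/-- A canonical AOE: the naive expansion of an activity-on-node graph. Each task has its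
own pair of endpoint vertices, all pairwise distinct; there are a global start vertex `s`
and a global end vertex `e`; unlabeled edges other than those leaving `s` or entering `e`
go from end vertices of tasks to start vertices of tasks; `s` has unlabeled edges to
exactly the vertices whose only incoming edges come from `s`, and `e` has unlabeled edges
from exactly the vertices whose only outgoing edges go to `e`. -/
def Canonical {V T : Type} [DecidableEq V] [Fintype T] (G : AOE V T) : Prop :=
  G.Acyclic ∧ G.unl.Nodup ∧
  Function.Injective G.St ∧ Function.Injective G.En ∧
  (∀ t t' : T, G.St t ≠ G.En t') ∧
  ∃ s e : V, s ≠ e ∧ s ∈ G.verts ∧ e ∈ G.verts ∧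
    (∀ t, G.St t ≠ s ∧ G.St t ≠ e ∧ G.En t ≠ s ∧ G.En t ≠ e) ∧
    (G.verts =
      insert s (insert e (Finset.image G.St Finset.univ ∪ Finset.image G.En Finset.univ))) ∧
    (∀ a b : V, (a, b) ∈ G.unl → a ≠ s → b ≠ e → (∃ t, G.En t = a) ∧ ∃ t', G.St t' = b) ∧
    (∀ b : V, (s, b) ∈ G.unl ↔
      b ∈ G.verts ∧ b ≠ s ∧ (∀ t, G.En t ≠ b) ∧ ∀ a, (a, b) ∈ G.unl → a = s) ∧
    (∀ a : V, (a, e) ∈ G.unl ↔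
      a ∈ G.verts ∧ a ≠ e ∧ (∀ t, G.St t ≠ a) ∧ ∀ b, (a, b) ∈ G.unl → b = e)

/-- An output AOE: obtained from a canonical AOE by a finite sequence of rule
applications, such that no rule can still be applied. -/
def IsOutput {V T : Type} [DecidableEq V] [Fintype T] (G A : AOE V T) : Prop :=
  Canonical G ∧ Relation.ReflTransGen Step G A ∧ ∀ B : AOE V T, ¬ Step A B

theorem mergeSetV_mem {V : Type} [DecidableEq V] {S : Finset V} (C : Finset V) (c x : V)
    (hx : x ∈ S) : (if x ∈ C then c else x) ∈ insert c (S \ C) := by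
  split_ifs with h
  · exact Finset.mem_insert_self _ _
  · exact Finset.mem_insert_of_mem (Finset.mem_sdiff.mpr ⟨hx, h⟩)

/-- Merge all vertices of `C` into the single vertex `c`. -/
def AOE.mergeSet {V T : Type} [DecidableEq V] (G : AOE V T) (C : Finset V) (c : V) :
    AOE V T where
  verts := insert c (G.verts \ C)
  St t := if G.St t ∈ C then c else G.St t
  En t := if G.En t ∈ C then c else G.En t
  stMem t := mergeSetV_mem C c (G.St t) (G.stMem t)
  enMem t := mergeSetV_mem C c (G.En t) (G.enMem t)
  unl := G.unl.map fun e => (if e.1 ∈ C then c else e.1, if e.2 ∈ C then c else e.2)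
  unlMem := by
    intro e he
    rw [Multiset.mem_map] at he
    obtain ⟨a, ha, rfl⟩ := he
    obtain ⟨h1, h2⟩ := G.unlMem a ha
    exact ⟨mergeSetV_mem C c a.1 h1, mergeSetV_mem C c a.2 h2⟩

/-!
Equivalent acyclic AOEs have the same reachability relation between tasks: any two tasks of which
the first reaches the second lie on a common potential critical path. Hence it suffices that in an
output AOE the start vertex of a task is determined by the set of tasks that reach it, and dually
for end vertices.

Let `x ≠ y` be reached by the same tasks, in an AOE to which no rule applies. Suppose that `x`
reaches `y` and that no task ends at `y`. The last edge `w → y` of a path is then unlabeled, so by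
Rule 3 there is another edge `w' → y`; as `w'` reaches `x`, hence `w`, Rule 2 deletes this edge, a
contradiction. If a task ended at `x`, then `x` would reach `y`, so a task would also end at `y`
and `y` would reach `x`, a cycle. Hence no task ends at `x` or `y`, and neither reaches the other.
Now if `a → x` is an edge, then `a` reaches `y` through a last edge `b → y`, and in the same way
`b` reaches `x`, so `a = b` by Rule 2. Thus `x` and `y` have the same in-neighbors, and Rule 1
merges them.
-/

section

open Relation

theorem not_transGen_map_self {V W : Type*} {R : V → V → Prop} {f : V → W} {c : W}
    (hfib : ∀ a b, f a = f b → a = b ∨ f a = c)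
    (hR : ∀ p q, f p = f q → ¬ TransGen R p q) (x : W) :
    ¬ TransGen (Relation.Map R f f) x x := by
  -- Lifts of consecutive edges fail to match only over `c`, and at most once, as no path joins two
  -- points over `c`.
  have lift : ∀ {x y}, TransGen (Relation.Map R f f) x y →
      (∃ a b, f a = x ∧ f b = y ∧ TransGen R a b) ∨
      ∃ a p q b, f a = x ∧ f p = c ∧ f q = c ∧ f b = y ∧ TransGen R a p ∧ TransGen R q b := by
    intro x y h
    induction h with
    | single h =>
      obtain ⟨a, b, hab, rfl, rfl⟩ := h
      exact .inl ⟨a, b, rfl, rfl, .single hab⟩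
    | tail _ h ih =>
      obtain ⟨b', d, hbd, rfl, rfl⟩ := h
      rcases ih with ⟨a, b, rfl, hb, hab⟩ | ⟨a, p, q, b, rfl, hp, hq, hb, hap, hqb⟩
      · rcases hfib b b' hb with rfl | hc
        · exact .inl ⟨a, d, rfl, rfl, hab.tail hbd⟩
        · exact .inr ⟨a, b, b', d, rfl, hc, hb ▸ hc, rfl, hab, .single hbd⟩
      · rcases hfib b b' hb with rfl | hc
        · exact .inr ⟨a, p, q, d, rfl, hp, hq, rfl, hap, hqb.tail hbd⟩
        · exact absurd hqb (hR q b (hq.trans hc.symm))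
  intro h
  rcases lift h with ⟨a, b, rfl, hb, hab⟩ | ⟨a, p, q, b, rfl, hp, hq, hb, hap, hqb⟩
  · exact hR a b hb.symm hab
  · rcases hfib a b hb.symm with rfl | hc
    · exact hR q p (hq.trans hp.symm) (hqb.trans hap)
    · exact hR a p (hc.trans hp.symm) hap

theorem mergeV_eq_left_iff {V : Type} [DecidableEq V] {u v a : V} :
    mergeV u v a = u ↔ a = u ∨ a = v := by
  unfold mergeV
  split_ifs with h <;> simp [h]

theorem mergeV_eq_mergeV_iff {V : Type} [DecidableEq V] {u v a b : V} :
    mergeV u v a = mergeV u v b ↔ a = b ∨ (a = u ∨ a = v) ∧ (b = u ∨ b = v) := by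
  unfold mergeV
  split_ifs <;> grind

namespace AOE

variable {V W T : Type} {G : AOE V T} {H : AOE W T} {t t' : T} {a b s u v x : V}

theorem adj_of_mem_unl (h : (a, b) ∈ G.unl) : G.adj a b := .inl h

theorem adj_task (G : AOE V T) (t : T) : G.adj (G.St t) (G.En t) := .inr ⟨t, rfl, rfl⟩

theorem mem_unl_of_adj (hb : ∀ t, G.En t ≠ b) (h : G.adj a b) : (a, b) ∈ G.unl :=
  h.resolve_right fun ⟨t, _, ht⟩ => hb t ht

theorem Acyclic.eq_of_reflTransGen (hG : G.Acyclic) (hab : ReflTransGen G.adj a b)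
    (hba : ReflTransGen G.adj b a) : a = b := by
  rcases reflTransGen_iff_eq_or_transGen.1 hab with h | h
  · exact h.symm
  · exact absurd (h.trans_left hba) (hG a)

/-! ### Reversal -/

/-- The AOE with all edges reversed, which exchanges the two versions of Rule 1 and the roles of
start and end vertices. -/
def reverse (G : AOE V T) : AOE V T where
  verts := G.verts
  St := G.En
  En := G.St
  stMem := G.enMem
  enMem := G.stMem
  unl := G.unl.map Prod.swap
  unlMem := by
    intro e he
    obtain ⟨e', he', rfl⟩ := Multiset.mem_map.1 he
    exact (G.unlMem e' he').symm

theorem mem_unl_reverse : (a, b) ∈ G.reverse.unl ↔ (b, a) ∈ G.unl := by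
  simp [reverse]

theorem adj_reverse (G : AOE V T) : G.reverse.adj = Function.swap G.adj := by
  funext a b
  simp only [adj, mem_unl_reverse, Function.swap, eq_iff_iff]
  simp only [reverse, and_comm]

theorem reflTransGen_reverse :
    ReflTransGen G.reverse.adj a b ↔ ReflTransGen G.adj b a := by
  rw [adj_reverse, reflTransGen_swap]

theorem transGen_reverse : TransGen G.reverse.adj a b ↔ TransGen G.adj b a := by
  rw [adj_reverse, transGen_swap]

theorem acyclic_reverse : G.reverse.Acyclic ↔ G.Acyclic := by
  simp only [Acyclic, transGen_reverse]

/-! ### Merging vertices and deleting edges -/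

section MergeAndDelete

variable [DecidableEq V]

theorem reverse_merge (G : AOE V T) (u v : V) :
    (G.merge u v).reverse = G.reverse.merge u v := by
  simp only [reverse, merge, Multiset.map_map, Function.comp_def, Prod.swap]

theorem reverse_delUnl (G : AOE V T) (u v : V) :
    (G.delUnl u v).reverse = G.reverse.delUnl v u := by
  simp only [reverse, delUnl, Multiset.map_erase _ Prod.swap_injective, Prod.swap]

theorem delUnl_merge (h : (u, v) ∈ G.unl) :
    (G.delUnl u v).merge u v = (G.merge u v).delUnl u u := by
  simp only [merge, delUnl, Multiset.map_erase_of_mem _ _ h, mergeV, if_true, ite_self]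
  rfl

theorem adj_merge (G : AOE V T) (u v : V) :
    (G.merge u v).adj = Relation.Map G.adj (mergeV u v) (mergeV u v) := by
  funext x y
  refine propext ⟨?_, ?_⟩
  · rintro (h | ⟨t, rfl, rfl⟩)
    · obtain ⟨⟨a, b⟩, hab, he⟩ := Multiset.mem_map.1 h
      obtain ⟨rfl, rfl⟩ := Prod.mk.inj he
      exact ⟨a, b, .inl hab, rfl, rfl⟩
    · exact ⟨_, _, G.adj_task t, rfl, rfl⟩
  · rintro ⟨a, b, hab | ⟨t, rfl, rfl⟩, rfl, rfl⟩
    · exact .inl (Multiset.mem_map_of_mem _ hab)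
    · exact .inr ⟨t, rfl, rfl⟩

theorem reflTransGen_merge (h : ReflTransGen G.adj a b) :
    ReflTransGen (G.merge u v).adj (mergeV u v a) (mergeV u v b) := by
  rw [adj_merge]
  exact h.lift _ fun a b hab => ⟨a, b, hab, rfl, rfl⟩

theorem exists_mergeV_eq_of_mem_verts_merge (hv : v ∈ G.verts) (hx : x ∈ (G.merge u v).verts) :
    ∃ a ∈ G.verts, mergeV u v a = x := by
  rcases Finset.mem_insert.1 hx with rfl | hx
  · exact ⟨v, hv, mergeV_eq_left_iff.2 (.inr rfl)⟩
  · obtain ⟨hxv, hx⟩ := Finset.mem_erase.1 hx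
    exact ⟨x, hx, if_neg hxv⟩

theorem Acyclic.merge (hG : G.Acyclic) (huv : ¬ TransGen G.adj u v)
    (hvu : ¬ TransGen G.adj v u) : (G.merge u v).Acyclic := by
  unfold Acyclic
  rw [adj_merge]
  refine not_transGen_map_self (c := u) (fun a b h => ?_) fun p q h hpq => ?_
  · rw [mergeV_eq_left_iff]
    exact (mergeV_eq_mergeV_iff.1 h).imp_right And.left
  · rcases mergeV_eq_mergeV_iff.1 h with rfl | ⟨rfl | rfl, rfl | rfl⟩
    exacts [hG _ hpq, hG _ hpq, huv hpq, hvu hpq, hG _ hpq]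

theorem adj_of_adj_delUnl (h : (G.delUnl u v).adj a b) : G.adj a b :=
  h.imp_left Multiset.mem_of_mem_erase

theorem adj_delUnl_or_eq (u v : V) (h : G.adj a b) :
    (G.delUnl u v).adj a b ∨ a = u ∧ b = v := by
  by_cases hab : (a, b) = (u, v)
  · exact .inr (Prod.mk.inj hab)
  · exact .inl (h.imp_left (Multiset.mem_erase_of_ne hab).2)

theorem transGen_of_delUnl (h : TransGen (G.delUnl u v).adj a b) : TransGen G.adj a b :=
  TransGen.mono (fun _ _ => adj_of_adj_delUnl) _ _ h

theorem Acyclic.delUnl (hG : G.Acyclic) (u v : V) : (G.delUnl u v).Acyclic :=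
  fun x h => hG x (transGen_of_delUnl h)

theorem reflTransGen_delUnl (huv : ReflTransGen (G.delUnl u v).adj u v)
    (hab : ReflTransGen G.adj a b) : ReflTransGen (G.delUnl u v).adj a b := by
  refine reflTransGen_closed (fun x y hxy => ?_) _ _ hab
  rcases adj_delUnl_or_eq u v hxy with h | ⟨rfl, rfl⟩
  · exact .single h
  · exact huv

theorem transGen_delUnl_or (u v : V) (h : TransGen G.adj a b) :
    TransGen (G.delUnl u v).adj a b ∨ ReflTransGen G.adj a u ∧ ReflTransGen G.adj v b := by
  induction h with
  | single h =>
    rcases adj_delUnl_or_eq u v h with h | ⟨rfl, rfl⟩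
    exacts [.inl (.single h), .inr ⟨.refl, .refl⟩]
  | tail hab hbc ih =>
    rcases ih with hab' | ⟨hau, hvb⟩
    · rcases adj_delUnl_or_eq u v hbc with h | ⟨rfl, rfl⟩
      exacts [.inl (hab'.tail h), .inr ⟨hab.to_reflTransGen, .refl⟩]
    · exact .inr ⟨hau, hvb.tail hbc⟩

end MergeAndDelete

/-! ### Terminal vertices -/

/-- `s` is a global start vertex: it reaches every vertex, and every unlabeled edge that does not
leave `s` leaves the end vertex of a task. -/
structure IsStart (G : AOE V T) (s : V) : Prop where
  reaches : ∀ v ∈ G.verts, ReflTransGen G.adj s v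
  eq_or_exists_En_eq : ∀ a b, (a, b) ∈ G.unl → a = s ∨ ∃ t, G.En t = a

/-- `G` has a global start vertex and a global end vertex. This is the part of the shape of a
canonical AOE, besides acyclicity, which the simplification rules preserve. -/
structure IsTwoTerminal (G : AOE V T) : Prop where
  exists_isStart : ∃ s, G.IsStart s
  exists_isEnd : ∃ e, G.reverse.IsStart e

section TwoTerminal

variable [DecidableEq V]

theorem IsStart.merge (hs : G.IsStart s) (hv : v ∈ G.verts) :
    (G.merge u v).IsStart (mergeV u v s) where
  reaches x hx := by
    obtain ⟨a, ha, rfl⟩ := exists_mergeV_eq_of_mem_verts_merge hv hx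
    exact reflTransGen_merge (hs.reaches a ha)
  eq_or_exists_En_eq x y hxy := by
    obtain ⟨⟨a, b⟩, hab, he⟩ := Multiset.mem_map.1 hxy
    obtain ⟨rfl, rfl⟩ := Prod.mk.inj he
    rcases hs.eq_or_exists_En_eq a b hab with rfl | ⟨t, rfl⟩
    exacts [.inl rfl, .inr ⟨t, rfl⟩]

theorem IsStart.delUnl (hs : G.IsStart s) (huv : ReflTransGen (G.delUnl u v).adj u v) :
    (G.delUnl u v).IsStart s where
  reaches x hx := reflTransGen_delUnl huv (hs.reaches x hx)
  eq_or_exists_En_eq a b hab := hs.eq_or_exists_En_eq a b (Multiset.mem_of_mem_erase hab)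

theorem IsTwoTerminal.merge (hG : G.IsTwoTerminal) (hv : v ∈ G.verts) :
    (G.merge u v).IsTwoTerminal where
  exists_isStart := hG.exists_isStart.imp' _ fun _ hs => hs.merge hv
  exists_isEnd := by
    rw [reverse_merge]
    exact hG.exists_isEnd.imp' _ fun _ he => he.merge hv

theorem IsTwoTerminal.delUnl (hG : G.IsTwoTerminal)
    (huv : ReflTransGen (G.delUnl u v).adj u v) : (G.delUnl u v).IsTwoTerminal where
  exists_isStart := hG.exists_isStart.imp fun _ hs => hs.delUnl huv
  exists_isEnd := by
    rw [← reflTransGen_reverse, reverse_delUnl] at huv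
    rw [reverse_delUnl]
    exact hG.exists_isEnd.imp fun _ he => he.delUnl huv

end TwoTerminal

/-! ### Reachability between tasks -/

theorem reach_trans {t₁ t₂ t₃ : T} (h₁₂ : G.reach t₁ t₂) (h₂₃ : G.reach t₂ t₃) :
    G.reach t₁ t₃ :=
  (h₁₂.tail (G.adj_task t₂)).trans h₂₃

theorem reach_reverse : G.reverse.reach t t' ↔ G.reach t' t := reflTransGen_reverse

theorem Acyclic.St_ne_of_reach (hG : G.Acyclic) (h : G.reach t t') : G.St t ≠ G.St t' :=
  fun he => hG _ (he ▸ TransGen.head' (G.adj_task t) h)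

theorem Acyclic.chain_iff_pairwise (hG : G.Acyclic) {l : List T} :
    G.chain l ↔ l.Pairwise G.reach := by
  have hrel : (fun t t' => t ≠ t' ∧ G.reach t t') = G.reach := by
    funext t t'
    exact propext ⟨And.right, fun h => ⟨fun he => hG.St_ne_of_reach h (congrArg G.St he), h⟩⟩
  have : IsTrans T G.reach := ⟨fun _ _ _ => reach_trans⟩
  unfold chain
  rw [hrel]
  exact List.isChain_iff_pairwise

theorem Acyclic.length_le_card_verts (hG : G.Acyclic) {l : List T} (hl : G.chain l) :
    l.length ≤ G.verts.card := by
  classical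
  have hnodup : (l.map G.St).Nodup :=
    List.pairwise_map.2 ((hG.chain_iff_pairwise.1 hl).imp hG.St_ne_of_reach)
  have hsub : (l.map G.St).toFinset ⊆ G.verts := by
    intro x hx
    obtain ⟨t, -, rfl⟩ := List.mem_map.1 (List.mem_toFinset.1 hx)
    exact G.stMem t
  calc l.length = (l.map G.St).toFinset.card := by
        rw [List.toFinset_card_of_nodup hnodup, List.length_map]
    _ ≤ G.verts.card := Finset.card_le_card hsub

theorem Acyclic.exists_critPath (hG : G.Acyclic) {l : List T} (hl : G.chain l) :
    ∃ m, G.critPath m ∧ l.Sublist m := by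
  induction hk : G.verts.card - l.length using Nat.strong_induction_on generalizing l with
  | _ k ih =>
    by_cases hmax : ∀ l', G.chain l' → l.Sublist l' → l' = l
    · exact ⟨l, ⟨hl, hmax⟩, .refl l⟩
    · push Not at hmax
      obtain ⟨l', hl', hsub, hne⟩ := hmax
      have hlt : l.length < l'.length :=
        hsub.length_le.lt_of_ne fun h => hne (hsub.eq_of_length h).symm
      have hcard : l.length < G.verts.card := hlt.trans_le (hG.length_le_card_verts hl')
      obtain ⟨m, hm, hsub'⟩ := ih _ (hk ▸ Nat.sub_lt_sub_left hcard hlt) hl' rfl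
      exact ⟨m, hm, hsub.trans hsub'⟩

theorem Equiv.reach (hGH : Equiv G H) (hG : G.Acyclic) (hH : H.Acyclic)
    (h : G.reach t t') : H.reach t t' := by
  have hchain : G.chain [t, t'] := hG.chain_iff_pairwise.2 (List.pairwise_pair.2 h)
  obtain ⟨m, hm, hsub⟩ := hG.exists_critPath hchain
  have hpair : m.Pairwise H.reach := hH.chain_iff_pairwise.1 ((hGH m).1 hm).1
  exact List.pairwise_pair.1 (hpair.sublist hsub)

theorem Equiv.reach_iff (hGH : Equiv G H) (hG : G.Acyclic) (hH : H.Acyclic) :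
    G.reach t t' ↔ H.reach t t' :=
  ⟨hGH.reach hG hH, Equiv.reach (fun l => (hGH l).symm) hH hG⟩

end AOE

/-! ### The simplification rules -/

section Step

variable {V T : Type} {G A : AOE V T} {u v : V}

theorem rule1OutCond_reverse : Rule1OutCond G.reverse u v ↔ Rule1InCond G u v := by
  simp only [Rule1OutCond, Rule1InCond, AOE.adj_reverse, Function.swap]
  rfl

theorem rule1InCond_reverse : Rule1InCond G.reverse u v ↔ Rule1OutCond G u v := by
  simp only [Rule1OutCond, Rule1InCond, AOE.adj_reverse, Function.swap]
  rfl

variable [DecidableEq V]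

theorem rule2Cond_reverse : Rule2Cond G.reverse u v ↔ Rule2Cond G v u := by
  simp only [Rule2Cond, AOE.mem_unl_reverse, ← AOE.reverse_delUnl, AOE.transGen_reverse]

theorem Rule3Cond.of_reverse (h : Rule3Cond G.reverse u v) : Rule3Cond G v u := by
  simp only [Rule3Cond, AOE.mem_unl_reverse, ← AOE.reverse_delUnl, AOE.transGen_reverse] at h
  obtain ⟨hmem, hpath, hSt, hEn, hnb⟩ := h
  refine ⟨hmem, hpath, hEn, hSt, fun w z hw hz => ?_⟩
  rw [AOE.adj_reverse] at hnb
  exact reflTransGen_swap.1 (hnb z w hz hw)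

theorem Rule1OutCond.acyclic_merge (h : Rule1OutCond G u v) (hG : G.Acyclic) :
    (G.merge u v).Acyclic := by
  obtain ⟨-, -, -, -, -, hnb⟩ := h
  refine hG.merge (fun huv => ?_) fun hvu => ?_
  · obtain ⟨w, huw, hwv⟩ := TransGen.head'_iff.1 huv
    exact hG v (.head' ((hnb w).1 huw) hwv)
  · obtain ⟨w, hvw, hwu⟩ := TransGen.head'_iff.1 hvu
    exact hG u (.head' ((hnb w).2 hvw) hwu)

theorem Step.acyclic (h : Step G A) (hG : G.Acyclic) : A.Acyclic := by
  cases h with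
  | rule1out u v h => exact h.acyclic_merge hG
  | rule1in u v h =>
    rw [← AOE.acyclic_reverse, AOE.reverse_merge]
    exact (rule1OutCond_reverse.2 h).acyclic_merge (AOE.acyclic_reverse.2 hG)
  | rule2 u v h => exact hG.delUnl u v
  | rule3 u v h =>
    refine (hG.delUnl u v).merge h.2.1 fun hvu => ?_
    exact hG v ((AOE.transGen_of_delUnl hvu).tail (AOE.adj_of_mem_unl h.1))

theorem Step.isTwoTerminal (h : Step G A) (hG : G.IsTwoTerminal) : A.IsTwoTerminal := by
  cases h with
  | rule1out u v h => exact hG.merge h.2.1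
  | rule1in u v h => exact hG.merge h.2.1
  | rule2 u v h => exact hG.delUnl h.2.to_reflTransGen
  | rule3 u v h =>
    rw [AOE.delUnl_merge h.1]
    exact (hG.merge (G.unlMem _ h.1).2).delUnl .refl

end Step

/-! ### Output AOEs -/

section Canonical

variable {V T : Type} {G A : AOE V T} {s : V}

theorem AOE.Acyclic.reflTransGen_of_forall_exists_adj (hG : G.Acyclic)
    (h : ∀ v ∈ G.verts, v ≠ s → ∃ a ∈ G.verts, G.adj a v) :
    ∀ v ∈ G.verts, ReflTransGen G.adj s v := by
  have : IsStrictOrder V (TransGen G.adj) := { irrefl := hG }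
  have hwf : (G.verts : Set V).WellFoundedOn (TransGen G.adj) :=
    G.verts.finite_toSet.wellFoundedOn
  intro v hv
  refine hwf.induction hv fun v hv ih => ?_
  by_cases hvs : v = s
  · rw [hvs]
  · obtain ⟨a, ha, hav⟩ := h v hv hvs
    exact (ih a ha (.single hav)).tail hav

variable [DecidableEq V] [Fintype T]

theorem Canonical.reverse (hG : Canonical G) : Canonical G.reverse := by
  obtain ⟨hac, hnodup, hSt, hEn, hne, s, e, hse, hs, he, hT, hverts, hunl, hs', he'⟩ := hG
  refine ⟨AOE.acyclic_reverse.2 hac, hnodup.map Prod.swap_injective, hEn, hSt,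
    fun t t' h => hne t' t h.symm, e, s, hse.symm, he, hs,
    fun t => ⟨(hT t).2.2.2, (hT t).2.2.1, (hT t).2.1, (hT t).1⟩, ?_, ?_, ?_, ?_⟩
  · change G.verts = insert e (insert s (Finset.image G.En _ ∪ Finset.image G.St _))
    rw [hverts, Finset.insert_comm, Finset.union_comm]
  · intro a b hab ha hb
    exact (hunl b a (AOE.mem_unl_reverse.1 hab) hb ha).symm
  · intro b
    simp only [AOE.mem_unl_reverse]
    exact he' b
  · intro a
    simp only [AOE.mem_unl_reverse]
    exact hs' a

theorem Canonical.exists_isStart (hG : Canonical G) : ∃ s, G.IsStart s := by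
  obtain ⟨hac, -, -, -, -, s, e, -, -, -, -, hverts, hunl, hs, he⟩ := hG
  refine ⟨s, hac.reflTransGen_of_forall_exists_adj fun v hv hvs => ?_, fun a b hab => ?_⟩
  · by_contra! hno
    have hEn : ∀ t, G.En t ≠ v := fun t ht => hno _ (G.stMem t) (ht ▸ G.adj_task t)
    have hunl : ∀ a, (a, v) ∉ G.unl := fun a ha => hno a (G.unlMem _ ha).1 (.inl ha)
    exact hunl s ((hs v).2 ⟨hv, hvs, hEn, fun a ha => absurd ha (hunl a)⟩)
  · by_cases has : a = s
    · exact .inl has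
    by_cases hbe : b = e
    · subst hbe
      obtain ⟨ha, hae, hSt, -⟩ := (he a).1 hab
      simp only [hverts, Finset.mem_insert, Finset.mem_union, Finset.mem_image,
        Finset.mem_univ, true_and, has, hae, hSt, exists_false, false_or] at ha
      exact .inr ha
    · exact .inr (hunl a b hab has hbe).1

theorem Canonical.isTwoTerminal (hG : Canonical G) : G.IsTwoTerminal :=
  ⟨hG.exists_isStart, hG.reverse.exists_isStart⟩

theorem IsOutput.acyclic (hA : IsOutput G A) : A.Acyclic :=
  hA.2.1.rec hA.1.1 fun _ h ih => h.acyclic ih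

theorem IsOutput.isTwoTerminal (hA : IsOutput G A) : A.IsTwoTerminal :=
  hA.2.1.rec hA.1.isTwoTerminal fun _ h ih => h.isTwoTerminal ih

end Canonical

/-! ### Vertices of a reduced AOE are determined by the tasks that reach them -/

namespace AOE

variable {V T : Type} {A : AOE V T} {t t' : T} {a s u v w x y : V}

/-- The same tasks reach the vertices `x` and `y`, where a task also reaches its own end vertex. -/
def SameReachingTasks (A : AOE V T) (x y : V) : Prop :=
  ∀ t, ReflTransGen A.adj (A.En t) x ↔ ReflTransGen A.adj (A.En t) y

theorem SameReachingTasks.symm (h : A.SameReachingTasks x y) : A.SameReachingTasks y x :=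
  fun t => (h t).symm

theorem SameReachingTasks.reflTransGen_of_adj (h : A.SameReachingTasks x y) (hs : A.IsStart s)
    (hy : y ∈ A.verts) (hax : A.adj a x) : ReflTransGen A.adj a y := by
  rcases hax with hax | ⟨t, rfl, rfl⟩
  · rcases hs.eq_or_exists_En_eq a x hax with rfl | ⟨t, rfl⟩
    · exact hs.reaches y hy
    · exact (h t).1 (.single (adj_of_mem_unl hax))
  · exact .head (A.adj_task t) ((h t).1 .refl)

variable [DecidableEq V]

/-- No simplification rule applies to `A`, as for an output AOE. -/
def IsReduced (A : AOE V T) : Prop := ∀ B : AOE V T, ¬ Step A B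

namespace IsReduced

theorem reverse (hA : A.IsReduced) : A.reverse.IsReduced := by
  intro B hB
  cases hB with
  | rule1out u v h => exact hA _ (.rule1in u v (rule1OutCond_reverse.1 h))
  | rule1in u v h => exact hA _ (.rule1out u v (rule1InCond_reverse.1 h))
  | rule2 u v h => exact hA _ (.rule2 v u (rule2Cond_reverse.1 h))
  | rule3 u v h => exact hA _ (.rule3 v u h.of_reverse)

theorem eq_of_forall_adj_iff (hA : A.IsReduced) (hx : x ∈ A.verts) (hy : y ∈ A.verts)
    (hxEn : ∀ t, A.En t ≠ x) (hyEn : ∀ t, A.En t ≠ y) (h : ∀ a, A.adj a x ↔ A.adj a y) :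
    x = y := by
  by_contra hxy
  exact hA _ (.rule1in x y ⟨hx, hy, hxy, hxEn, hyEn, h⟩)

theorem not_transGen_of_mem_unl (hA : A.IsReduced) (hac : A.Acyclic) (huv : (u, v) ∈ A.unl)
    (huw : TransGen A.adj u w) : ¬ TransGen A.adj w v := by
  intro hwv
  rcases transGen_delUnl_or u v huw with huw' | ⟨-, hvw⟩
  · rcases transGen_delUnl_or u v hwv with hwv' | ⟨hwu, -⟩
    · exact hA _ (.rule2 u v ⟨huv, huw'.trans hwv'⟩)
    · exact hac u (huw.trans_left hwu)
  · exact hac w (hwv.trans_left hvw)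

theorem exists_ne_mem_unl (hA : A.IsReduced) (huv : (u, v) ∈ A.unl) (hv : ∀ t, A.En t ≠ v) :
    ∃ w, w ≠ u ∧ (w, v) ∈ A.unl := by
  by_contra! h
  have honly : ∀ w, (w, v) ∈ A.unl → w = u := fun w hw => by_contra fun hwu => h w hwu hw
  refine hA _ (.rule3 u v ⟨huv, fun hpath => hA _ (.rule2 u v ⟨huv, hpath⟩),
    fun _ => ⟨hv, honly⟩, fun ⟨t, ht⟩ => absurd ht (hv t), fun w z hwv huz => ?_⟩)
  rw [honly w (mem_unl_of_adj hv hwv)]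
  exact .single huz

section SameReachingTasks

variable (hA : A.IsReduced) (hac : A.Acyclic) (hs : A.IsStart s) (hx : x ∈ A.verts)
include hA hac hs hx

theorem not_reflTransGen_of_forall_En_ne (h : A.SameReachingTasks x y) (hxy : x ≠ y)
    (hyEn : ∀ t, A.En t ≠ y) : ¬ ReflTransGen A.adj x y := by
  intro hpath
  rcases hpath.cases_tail with rfl | ⟨w, hxw, hwy⟩
  · exact hxy rfl
  obtain ⟨w', hw', hw'y⟩ := hA.exists_ne_mem_unl (mem_unl_of_adj hyEn hwy) hyEn
  have hw'w : ReflTransGen A.adj w' w :=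
    (h.symm.reflTransGen_of_adj hs hx (adj_of_mem_unl hw'y)).trans hxw
  rcases reflTransGen_iff_eq_or_transGen.1 hw'w with rfl | hw'w
  · exact hw' rfl
  · exact hA.not_transGen_of_mem_unl hac hw'y hw'w (.single hwy)

theorem En_ne_of_sameReachingTasks (h : A.SameReachingTasks x y) (hxy : x ≠ y) (t : T) :
    A.En t ≠ x := by
  rintro rfl
  have hpath : ReflTransGen A.adj (A.En t) y := (h t).1 .refl
  refine hA.not_reflTransGen_of_forall_En_ne hac hs hx h hxy (fun t' ht' => ?_) hpath
  subst ht'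
  exact hxy (hac.eq_of_reflTransGen hpath ((h t').2 .refl))

variable (hy : y ∈ A.verts)
include hy

theorem not_reflTransGen_of_sameReachingTasks (h : A.SameReachingTasks x y) (hxy : x ≠ y) :
    ¬ ReflTransGen A.adj x y :=
  hA.not_reflTransGen_of_forall_En_ne hac hs hx h hxy
    (hA.En_ne_of_sameReachingTasks hac hs hy h.symm hxy.symm)

theorem adj_of_sameReachingTasks (h : A.SameReachingTasks x y) (hxy : x ≠ y)
    (hax : A.adj a x) : A.adj a y := by
  have hnxy := hA.not_reflTransGen_of_sameReachingTasks hac hs hx hy h hxy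
  have hnyx := hA.not_reflTransGen_of_sameReachingTasks hac hs hy hx h.symm hxy.symm
  have hax' := mem_unl_of_adj (hA.En_ne_of_sameReachingTasks hac hs hx h hxy) hax
  rcases (h.reflTransGen_of_adj hs hy hax).cases_tail with rfl | ⟨b, hab, hby⟩
  · exact absurd (.single hax) hnyx
  rcases reflTransGen_iff_eq_or_transGen.1 hab with rfl | hab
  · exact hby
  rcases reflTransGen_iff_eq_or_transGen.1 (h.symm.reflTransGen_of_adj hs hx hby) with rfl | hbx
  · exact absurd (.single hby) hnxy
  · exact absurd hbx (hA.not_transGen_of_mem_unl hac hax' hab)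

theorem eq_of_sameReachingTasks (h : A.SameReachingTasks x y) : x = y := by
  by_contra hxy
  refine hxy (hA.eq_of_forall_adj_iff hx hy
    (hA.En_ne_of_sameReachingTasks hac hs hx h hxy)
    (hA.En_ne_of_sameReachingTasks hac hs hy h.symm (Ne.symm hxy)) fun a => ⟨?_, ?_⟩)
  · exact hA.adj_of_sameReachingTasks hac hs hx hy h hxy
  · exact hA.adj_of_sameReachingTasks hac hs hy hx h.symm (Ne.symm hxy)

end SameReachingTasks

theorem St_eq_of_forall_reach_iff (hA : A.IsReduced) (hac : A.Acyclic) (hs : A.IsStart s)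
    (h : ∀ r, A.reach r t ↔ A.reach r t') : A.St t = A.St t' :=
  hA.eq_of_sameReachingTasks hac hs (A.stMem t) (A.stMem t') h

end IsReduced

end AOE

end

theorem stmt9_general {V W T : Type} [DecidableEq V] {A : AOE V T} {H : AOE W T}
    (hA : A.IsReduced) (hterm : A.IsTwoTerminal) (hAac : A.Acyclic) (hHac : H.Acyclic)
    (hEq : AOE.Equiv A H) (t t' : T) :
    (A.St t ≠ A.St t' → H.St t ≠ H.St t') ∧ (A.En t ≠ A.En t' → H.En t ≠ H.En t') := by
  obtain ⟨⟨s, hs⟩, ⟨e, he⟩⟩ := hterm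
  have hreach : ∀ r r', A.reach r r' ↔ H.reach r r' := fun _ _ => hEq.reach_iff hAac hHac
  constructor
  · refine mt fun hSt => hA.St_eq_of_forall_reach_iff hAac hs fun r => ?_
    rw [hreach, hreach, AOE.reach, AOE.reach, hSt]
  · refine mt fun hEn => hA.reverse.St_eq_of_forall_reach_iff
      (AOE.acyclic_reverse.2 hAac) he fun r => ?_
    rw [AOE.reach_reverse, AOE.reach_reverse, hreach, hreach, AOE.reach, AOE.reach, hEn]

/-- For an output AOE `A` and an optimal AOE `Opt ≡ A`: distinct start
vertices in `A` stay distinct in `Opt`, and distinct end vertices in `A` stay distinct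
in `Opt`. -/
theorem stmt9 {V W T : Type} [DecidableEq V] [Fintype T]
    (G A : AOE V T) (hA : IsOutput G A)
    (Opt : AOE W T) (hAc : Opt.Acyclic) (hOpt : Optimal Opt) (hEq : AOE.Equiv A Opt) :
    ∀ t t' : T, t ≠ t' →
      (A.St t ≠ A.St t' → Opt.St t ≠ Opt.St t') ∧
        (A.En t ≠ A.En t' → Opt.En t ≠ Opt.En t') :=
  fun t t' _ => stmt9_general hA.2.2 hA.isTwoTerminal hA.acyclic hAc hEq t t'

end AOEPaper
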